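/- arXiv:2008.09293 — 6 statements merged into one kernel-verified Lean document; each statement's English description precedes it below -/
import Mathlib

section
/- Let S be a state space and let predicates b over S have Boolean semantics ⟦b⟧ : S → Prop and quantitative semantics ⟦b⟧_q : S → ℝ satisfying ⟦b⟧_q(s) > 0 ↔ ⟦b⟧(s) for all s. Consider specifications φ generated by the grammar φ ::= achieve b | φ ensuring b | φ1 ; φ2 | φ1 or φ2, with Boolean and quantitative semantics over rollouts as defined in the context (quantitative semantics valued in extended reals, with suprema over empty index sets equal to −∞ and infima over empty index sets equal to +∞). Then for every specification φ and every rollout ζ (a finite sequence of states s_0, …, s_t with t ≥ 0), the Boolean semantics ⟦φ⟧(ζ) holds if and only if the quantitative semantics ⟦φ⟧_q(ζ) > 0. -/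
/-!
The theorem holds by structural induction on the specification, generalizing over the rollout:
positivity commutes with `max`, `min` and suprema in any complete linear order, matching `∨`, `∧`
and `∃`. The `∀` of `ensuring` needs `pos_iInf_fin_iff`: only finitely many states are
constrained, so the infimum of their values stays positive.
-/

/-- Specifications generated by `achieve b`, `φ ensuring b`, sequencing `φ₁ ; φ₂`,
and choice `φ₁ or φ₂`, where `b` ranges over an abstract type `P` of predicates. -/
inductive Spec (P : Type*) where
  | achieve : P → Spec P
  | ensuring : Spec P → P → Spec P
  | seq : Spec P → Spec P → Spec P
  | choice : Spec P → Spec P → Spec P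

/-- Boolean semantics of a specification over a rollout `s_0, …, s_t`, represented as a
function `ζ : ℕ → S` together with the number of transitions `t`. -/
def Spec.bsem {P S : Type*} (bs : P → S → Prop) : Spec P → (ℕ → S) → ℕ → Prop
  | .achieve b, ζ, t => ∃ i < t, bs b (ζ i)
  | .ensuring φ b, ζ, t => φ.bsem bs ζ t ∧ ∀ i < t, bs b (ζ i)
  | .seq φ₁ φ₂, ζ, t => ∃ i < t, φ₁.bsem bs ζ i ∧ φ₂.bsem bs (fun j => ζ (i + j)) (t - i)
  | .choice φ₁ φ₂, ζ, t => φ₁.bsem bs ζ t ∨ φ₂.bsem bs ζ t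

/-- Quantitative semantics of a specification over a rollout, valued in the extended reals;
suprema over empty index sets are `⊥ = −∞` and infima over empty index sets are `⊤ = +∞`. -/
noncomputable def Spec.qsem {P S : Type*} (qs : P → S → ℝ) : Spec P → (ℕ → S) → ℕ → EReal
  | .achieve b, ζ, t => ⨆ i : Fin t, (qs b (ζ i.1) : EReal)
  | .ensuring φ b, ζ, t => min (φ.qsem qs ζ t) (⨅ i : Fin t, (qs b (ζ i.1) : EReal))
  | .seq φ₁ φ₂, ζ, t =>
      ⨆ i : Fin t, min (φ₁.qsem qs ζ i.1) (φ₂.qsem qs (fun j => ζ (i.1 + j)) (t - i.1))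
  | .choice φ₁ φ₂, ζ, t => max (φ₁.qsem qs ζ t) (φ₂.qsem qs ζ t)

/-- An infimum of positive values is positive here because the index set is
finite, so the infimum is attained (or is `⊤` when there are no indices). -/
theorem pos_iInf_fin_iff {t : ℕ} (f : Fin t → EReal) : 0 < ⨅ i, f i ↔ ∀ i, 0 < f i := by
  refine ⟨fun hf i => hf.trans_le (iInf_le f i), fun hf => ?_⟩
  cases isEmpty_or_nonempty (Fin t) with
  | inl _ => simp [iInf_of_empty]
  | inr _ =>
    obtain ⟨i, hi⟩ := exists_eq_ciInf_of_finite (f := f)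
    exact hi ▸ hf i

theorem spec_bsem_iff_qsem_pos {P S : Type*} (bs : P → S → Prop) (qs : P → S → ℝ)
    (h : ∀ (b : P) (s : S), qs b s > 0 ↔ bs b s) :
    ∀ (φ : Spec P) (ζ : ℕ → S) (t : ℕ), φ.bsem bs ζ t ↔ φ.qsem qs ζ t > 0 := by
  intro φ
  induction φ with
  | achieve b =>
    intro ζ t
    simp [Spec.bsem, Spec.qsem, lt_iSup_iff, Fin.exists_iff, ← h]
  | ensuring φ b ih =>
    intro ζ t
    simp [Spec.bsem, Spec.qsem, pos_iInf_fin_iff, Fin.forall_iff, ← h, ih]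
  | seq φ₁ φ₂ ih₁ ih₂ =>
    intro ζ t
    simp [Spec.bsem, Spec.qsem, lt_iSup_iff, Fin.exists_iff, ih₁, ih₂, and_left_comm]
  | choice φ₁ φ₂ ih₁ ih₂ =>
    intro ζ t
    simp [Spec.bsem, Spec.qsem, ih₁, ih₂]
end

section
/- In the shaped-reward setting (see context), for any two abstract augmented rollouts ζ = (q, R, m) and ζ' = (q', R', m'), if R > R' (as extended reals), then R_s(ζ) > R_s(ζ'). -/
/-!
A rollout with base reward above another's has base reward above `⊥`, so it ends in a final state
and its shaped reward equals its base reward, which exceeds `Cl`. The other rollout is either final,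
where shaping changes nothing, or non-final, where the depth penalty of at least `2 * Cu` outweighs
the progress term `m ≤ Cu` and keeps the shaped reward at most `Cl`.
-/

open scoped Classical

/-- An abstract augmented rollout: its final monitor state `q`, its base reward `R`
(an extended real), and the maximum value `m` of the progress function along the rollout
after reaching `q`. -/
structure AbsRollout (Q : Type*) where
  q : Q
  R : EReal
  m : ℝ

/-- Validity conditions on an abstract augmented rollout, in the shaped-reward setting with
final states `F`, depth function `d`, bound `D`, and constants `Cu` and `Cl`:
the base reward is `−∞` off final states and strictly above `Cl` on final states,
`|m| ≤ Cu`, and `d q + 1 ≤ D` off final states. -/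
def AbsRollout.Valid {Q : Type*} (F : Set Q) (d : Q → ℕ) (D : ℕ) (Cu Cl : ℝ)
    (ζ : AbsRollout Q) : Prop :=
  (ζ.q ∉ F → ζ.R = ⊥) ∧ (ζ.q ∈ F → (Cl : EReal) < ζ.R) ∧
    |ζ.m| ≤ Cu ∧ (ζ.q ∉ F → d ζ.q + 1 ≤ D)

/-- The shaped reward: the base reward on final monitor states, and
`m + 2·Cu·(d q − D) + Cl` on non-final monitor states. -/
noncomputable def shapedReward {Q : Type*} (F : Set Q) (d : Q → ℕ) (D : ℕ) (Cu Cl : ℝ)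
    (ζ : AbsRollout Q) : EReal :=
  if ζ.q ∈ F then ζ.R
  else ((ζ.m + 2 * Cu * ((d ζ.q : ℝ) - (D : ℝ)) + Cl : ℝ) : EReal)

theorem shapedReward_strict_mono {Q : Type*} (F : Set Q) (d : Q → ℕ) (D : ℕ)
    (Cu Cl : ℝ) (hCu : 0 ≤ Cu) (ζ ζ' : AbsRollout Q)
    (hζ : ζ.Valid F d D Cu Cl) (hζ' : ζ'.Valid F d D Cu Cl)
    (h : ζ.R > ζ'.R) :
    shapedReward F d D Cu Cl ζ > shapedReward F d D Cu Cl ζ' := by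
  obtain ⟨hbot, hCl, -, -⟩ := hζ
  obtain ⟨-, -, hm', hd'⟩ := hζ'
  -- A non-final `ζ` would have base reward `⊥`, which exceeds nothing.
  have hq : ζ.q ∈ F := by
    by_contra hq
    rw [hbot hq] at h
    exact not_lt_bot h
  unfold shapedReward
  rw [if_pos hq]
  split_ifs with hq'
  · exact h
  · -- Since `m' ≤ Cu` and `d q' - D ≤ -1`, the shaped reward of `ζ'` is at most `Cl - Cu ≤ Cl`.
    refine lt_of_le_of_lt (EReal.coe_le_coe_iff.2 ?_) (hCl hq)
    have hd : (d ζ'.q : ℝ) + 1 ≤ D := by exact_mod_cast hd' hq'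
    have hm := (abs_le.1 hm').2
    nlinarith [mul_nonneg hCu (sub_nonneg.2 hd)]
end

section
/- In the shaped-reward setting (see context), for any two abstract augmented rollouts ζ = (q, R, m) and ζ' = (q', R', m') whose final monitor states q and q' are both non-final (q ∉ F and q' ∉ F) and satisfy d(q) > d(q'), we have R_s(ζ) ≥ R_s(ζ'). -/
open scoped Classical

theorem shapedReward_mono_depth {Q : Type*} (F : Set Q) (d : Q → ℕ) (D : ℕ)
    (Cu Cl : ℝ) (hCu : 0 ≤ Cu) (ζ ζ' : AbsRollout Q)
    (hζ : ζ.Valid F d D Cu Cl) (hζ' : ζ'.Valid F d D Cu Cl)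
    (hq : ζ.q ∉ F) (hq' : ζ'.q ∉ F) (hd : d ζ.q > d ζ'.q) :
    shapedReward F d D Cu Cl ζ ≥ shapedReward F d D Cu Cl ζ' := by
  obtain ⟨-, -, hm, -⟩ := hζ
  obtain ⟨-, -, hm', -⟩ := hζ'
  rw [abs_le] at hm hm'
  -- One extra level of depth is worth `2 * Cu`, which covers any gap `m' - m` between
  -- two numbers in `[-Cu, Cu]`.
  have hd1 : (d ζ'.q : ℝ) + 1 ≤ d ζ.q := by exact_mod_cast hd
  have hgain := mul_le_mul_of_nonneg_left hd1 hCu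
  simp only [shapedReward, if_neg hq, if_neg hq', ge_iff_le, EReal.coe_le_coe_iff]
  linarith
end

section
/- Let S be a type, let b be a predicate with Boolean semantics ⟦b⟧ : S → Prop and quantitative semantics ⟦b⟧_q : S → ℝ satisfying ⟦b⟧_q(s) > 0 ↔ ⟦b⟧(s) for all s, and let s_0, …, s_t be a rollout (t ≥ 0). Call an 'augmented run' a pair of sequences q_0, …, q_t ∈ {0, 1} and x_0, …, x_t ∈ ℝ such that q_0 = 0, x_0 = 0, and for each i < t either (self-loop) q_{i+1} = q_i and x_{i+1} = x_i, or (goal transition) q_i = 0, q_{i+1} = 1, ⟦b⟧(s_i) holds, and x_{i+1} = ⟦b⟧_q(s_i). Then there exists an augmented run with q_t = 1 and x_t > 0 if and only if there exists i < t with ⟦b⟧(s_i), i.e., if and only if the rollout satisfies the specification 'achieve b'. -/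
/-!
The monitor can leave state `0` only through the goal transition, which needs a state
satisfying `b`; this gives the forward direction. Conversely, if `⟦b⟧(s_i)` holds with `i < t`,
the run that takes the goal transition at step `i` ends in state `1` with register value
`⟦b⟧_q(s_i)`, which is positive because the sign of `⟦b⟧_q` agrees with `⟦b⟧`.
-/

/-- An augmented run of the task monitor for `achieve b` over the rollout `s_0, …, s_t`:
monitor states `q_i ∈ {0,1}` and register values `x_i ∈ ℝ` with `q_0 = 0`, `x_0 = 0`, and
at each step `i < t` either a self-loop (monitor state and register unchanged) or the goal
transition from `0` to `1`, enabled when `⟦b⟧(s_i)` holds, setting the register to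
`⟦b⟧_q(s_i)`. -/
def IsAugRunAchieve {S : Type*} (bsem : S → Prop) (qsem : S → ℝ)
    (s : ℕ → S) (t : ℕ) (q : ℕ → Fin 2) (x : ℕ → ℝ) : Prop :=
  q 0 = 0 ∧ x 0 = 0 ∧
    ∀ i < t, (q (i + 1) = q i ∧ x (i + 1) = x i) ∨
      (q i = 0 ∧ q (i + 1) = 1 ∧ bsem (s i) ∧ x (i + 1) = qsem (s i))

theorem achieve_monitor_correct {S : Type*} (bsem : S → Prop) (qsem : S → ℝ)
    (h : ∀ s, qsem s > 0 ↔ bsem s) (s : ℕ → S) (t : ℕ) :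
    (∃ (q : ℕ → Fin 2) (x : ℕ → ℝ),
        IsAugRunAchieve bsem qsem s t q x ∧ q t = 1 ∧ x t > 0) ↔
      ∃ i < t, bsem (s i) := by
  constructor
  · rintro ⟨q, x, ⟨hq0, -, hstep⟩, hqt, -⟩
    by_contra! hb
    -- Without a state satisfying `b`, only self-loops are possible, so `q` never leaves `0`.
    have hq : ∀ i ≤ t, q i = 0 := by
      intro i
      induction i with
      | zero => exact fun _ => hq0
      | succ i ih =>
        intro hi
        rcases hstep i (by omega) with ⟨hloop, -⟩ | ⟨-, -, hbi, -⟩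
        · rw [hloop, ih (by omega)]
        · exact absurd hbi (hb i (by omega))
    rw [hq t le_rfl] at hqt
    exact absurd hqt (by decide)
  · rintro ⟨i, hi, hbi⟩
    -- The run takes the goal transition at step `i` and self-loops at every other step.
    refine ⟨fun j => if j ≤ i then 0 else 1, fun j => if j ≤ i then 0 else qsem (s i),
      ⟨by simp, by simp, fun j _ => ?_⟩, by simp [hi], by simpa [hi.not_ge] using (h _).2 hbi⟩
    rcases lt_trichotomy j i with hj | rfl | hj
    · left
      simp [hj.le, Nat.succ_le_of_lt hj]
    · right
      simp [hbi]
    · left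
      simp [show ¬ j ≤ i by omega, show ¬ j + 1 ≤ i by omega]
end

section
/- Let S be a type, let b and c be predicates with Boolean semantics ⟦b⟧, ⟦c⟧ : S → Prop and quantitative semantics ⟦b⟧_q, ⟦c⟧_q : S → ℝ satisfying ⟦b⟧_q(s) > 0 ↔ ⟦b⟧(s) and ⟦c⟧_q(s) > 0 ↔ ⟦c⟧(s) for all s, and let s_0, …, s_t be a rollout with t ≥ 1. Call an 'augmented run' a triple of sequences q_0, …, q_t ∈ {0, 1}, x_0, …, x_t ∈ ℝ, and y_0, …, y_t valued in extended reals, such that q_0 = 0, x_0 = 0, y_0 = +∞, for each i < t the register y is updated by y_{i+1} = min(y_i', ⟦c⟧_q(s_i)) where y_i' is the value carried from step i, and either (self-loop) q_{i+1} = q_i and x_{i+1} = x_i, or (goal transition) q_i = 0, q_{i+1} = 1, ⟦b⟧(s_i) holds, and x_{i+1} = ⟦b⟧_q(s_i); here y_i' = y_i, so y_{i+1} = min(y_i, ⟦c⟧_q(s_i)) in both cases. Then there exists an augmented run with q_t = 1 and min(x_t, y_t) > 0 if and only if (∃ i < t, ⟦b⟧(s_i)) and (∀ i < t, ⟦c⟧(s_i)),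 i.e., if and only if the rollout satisfies the specification '(achieve b) ensuring c'. -/
/-!
The register `y` holds the running minimum of `⟦c⟧_q`, starting from `+∞`, so along any run
`y_n > 0` exactly when `⟦c⟧` holds at every state before step `n`
(`ensuring_register_pos_iff`). A run can only reach monitor state `1` through the goal transition,
which requires `⟦b⟧` at some earlier state (`exists_goal_of_final`). Conversely, if `⟦b⟧(s_k)`
with `k < t`, the run taking the goal transition at step `k` ends in state `1` with
`x_t = ⟦b⟧_q(s_k) > 0`.
-/

/-- An augmented run of the task monitor for `(achieve b) ensuring c` over the rollout
`s_0, …, s_t`: monitor states `q_i ∈ {0,1}`, register values `x_i ∈ ℝ` and `y_i` (extended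
reals) with `q_0 = 0`, `x_0 = 0`, `y_0 = +∞`; on every step `i < t` the register `y` is
updated by `y_{i+1} = min (y_i) (⟦c⟧_q(s_i))`, and either a self-loop leaves `q` and `x`
unchanged, or the goal transition from `0` to `1`, enabled when `⟦b⟧(s_i)` holds, sets `x`
to `⟦b⟧_q(s_i)`. -/
def IsAugRunAchieveEnsuring {S : Type*} (bsem : S → Prop) (bqsem : S → ℝ) (cqsem : S → ℝ)
    (s : ℕ → S) (t : ℕ) (q : ℕ → Fin 2) (x : ℕ → ℝ) (y : ℕ → EReal) : Prop :=
  q 0 = 0 ∧ x 0 = 0 ∧ y 0 = ⊤ ∧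
    ∀ i < t, (y (i + 1) = min (y i) ((cqsem (s i) : EReal))) ∧
      ((q (i + 1) = q i ∧ x (i + 1) = x i) ∨
        (q i = 0 ∧ q (i + 1) = 1 ∧ bsem (s i) ∧ x (i + 1) = bqsem (s i)))

theorem ensuring_register_pos_iff {S : Type*} {csem : S → Prop} {cqsem : S → ℝ}
    (hc : ∀ s, cqsem s > 0 ↔ csem s) {s : ℕ → S} {t : ℕ} {y : ℕ → EReal} (hy0 : y 0 = ⊤)
    (hy : ∀ i < t, y (i + 1) = min (y i) (cqsem (s i) : EReal)) :
    ∀ n ≤ t, 0 < y n ↔ ∀ i < n, csem (s i) := by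
  intro n
  induction n with
  | zero => intro _; simp [hy0]
  | succ n ih =>
    intro hn
    rw [hy n hn, lt_min_iff, ih (by omega), EReal.coe_pos, ← gt_iff_lt, hc,
      Nat.forall_lt_succ_right]

theorem exists_goal_of_final {S : Type*} {bsem : S → Prop} {bqsem cqsem : S → ℝ} {s : ℕ → S}
    {t : ℕ} {q : ℕ → Fin 2} {x : ℕ → ℝ} {y : ℕ → EReal}
    (h : IsAugRunAchieveEnsuring bsem bqsem cqsem s t q x y) :
    ∀ n ≤ t, q n = 1 → ∃ i < n, bsem (s i) := by
  obtain ⟨hq0, -, -, hstep⟩ := h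
  intro n
  induction n with
  | zero => intro _ h1; simp [hq0] at h1
  | succ n ih =>
    intro hn h1
    rcases (hstep n hn).2 with ⟨hq, -⟩ | ⟨-, -, hbn, -⟩
    · obtain ⟨i, hi, hbi⟩ := ih (by omega) (hq ▸ h1)
      exact ⟨i, by omega, hbi⟩
    · exact ⟨n, by omega, hbn⟩

theorem achieve_ensuring_monitor_correct {S : Type*} (bsem csem : S → Prop)
    (bqsem cqsem : S → ℝ)
    (hb : ∀ s, bqsem s > 0 ↔ bsem s) (hc : ∀ s, cqsem s > 0 ↔ csem s)
    (s : ℕ → S) (t : ℕ) (ht : 1 ≤ t) :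
    (∃ (q : ℕ → Fin 2) (x : ℕ → ℝ) (y : ℕ → EReal),
        IsAugRunAchieveEnsuring bsem bqsem cqsem s t q x y ∧ q t = 1 ∧
          min ((x t : EReal)) (y t) > 0) ↔
      (∃ i < t, bsem (s i)) ∧ (∀ i < t, csem (s i)) := by
  constructor
  · rintro ⟨q, x, y, hrun, hqt, hpos⟩
    refine ⟨exists_goal_of_final hrun t le_rfl hqt, ?_⟩
    exact (ensuring_register_pos_iff hc hrun.2.2.1 (fun i hi => (hrun.2.2.2 i hi).1) t le_rfl).1
      (lt_min_iff.1 hpos).2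
  · rintro ⟨⟨k, hk, hbk⟩, hcs⟩
    -- The goal transition is taken at step `k`, so its effect is visible from index `k + 1` on.
    let y : ℕ → EReal := fun n => Nat.rec ⊤ (fun i v => min v (cqsem (s i) : EReal)) n
    refine ⟨fun n => if n ≤ k then 0 else 1, fun n => if n ≤ k then 0 else bqsem (s k), y,
      ⟨by simp, by simp, rfl, fun i _ => ⟨rfl, ?_⟩⟩, by simp [hk], ?_⟩
    · rcases lt_trichotomy i k with hik | rfl | hik
      · left
        simp [hik.le, Nat.succ_le_of_lt hik]
      · right
        simp [hbk]
      · left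
        simp [hik.not_ge, show ¬ i + 1 ≤ k by omega]
    · refine lt_min ?_ ((ensuring_register_pos_iff hc rfl (fun i _ => rfl) t le_rfl).2 hcs)
      simpa [hk.not_ge] using (hb _).2 hbk
end

section
/- In the shaped-reward setting (see context), let Z be a set of abstract augmented rollouts and suppose ζ ∈ Z maximizes the shaped reward over Z, i.e., R_s(ζ) ≥ R_s(ζ') for all ζ' ∈ Z. Then ζ also maximizes the base reward over Z, i.e., R(ζ) ≥ R(ζ') (as extended reals) for all ζ' ∈ Z. -/
/-!
A non-final rollout has base reward `⊥`, so only a final competitor can threaten the maximizer.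
The shaping constants keep every non-final shaped reward at most `Cl`, strictly below every final
one; hence a maximizer facing a final competitor is itself final, and on final rollouts the shaped
and base rewards agree.
-/

open scoped Classical

theorem shapedReward_argmax_base {Q : Type*} (F : Set Q) (d : Q → ℕ) (D : ℕ)
    (Cu Cl : ℝ) (hCu : 0 ≤ Cu) (Z : Set (AbsRollout Q))
    (hZ : ∀ ζ ∈ Z, ζ.Valid F d D Cu Cl) (ζ : AbsRollout Q) (hζZ : ζ ∈ Z)
    (hmax : ∀ ζ' ∈ Z, shapedReward F d D Cu Cl ζ ≥ shapedReward F d D Cu Cl ζ') :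
    ∀ ζ' ∈ Z, ζ.R ≥ ζ'.R := by
  intro ζ' hζ'
  have h := hmax ζ' hζ'
  obtain ⟨-, -, hm, hd⟩ := hZ ζ hζZ
  obtain ⟨hbot, hlow, -, -⟩ := hZ ζ' hζ'
  by_cases hF' : ζ'.q ∈ F
  · by_cases hF : ζ.q ∈ F
    · simpa [shapedReward, hF, hF'] using h
    · -- Since `d q - D ≤ -1` and `m ≤ Cu`, a non-final `ζ` has shaped reward at most
      -- `Cl - Cu ≤ Cl`, strictly below that of the final rollout `ζ'`.
      exfalso
      simp only [shapedReward, hF, hF', if_true, if_false] at h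
      have hd' : (d ζ.q : ℝ) + 1 ≤ D := by exact_mod_cast hd hF
      have hle : ζ.m + 2 * Cu * ((d ζ.q : ℝ) - (D : ℝ)) + Cl ≤ Cl := by
        nlinarith [le_abs_self ζ.m]
      exact absurd ((hlow hF').trans_le (h.trans (EReal.coe_le_coe_iff.mpr hle)))
        (lt_irrefl _)
  · rw [hbot hF']
    exact bot_le
end
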